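/- Let D be an integral domain and ⋆ a semistar operation on D such that D is a Prüfer ⋆-multiplication domain. Let P be a prime ideal of D, let Q be a nonzero P-primary ideal of D, and let x ∈ D \ P. Then Q^⋆̃ = (Q(Q + xD))^⋆̃. -/

import Mathlib

open scoped Pointwise

section SemistarDefs

variable {D : Type*} [CommRing D] [IsDomain D]
variable {K : Type*} [Field K] [Algebra D K] [IsFractionRing D K]

/-- `star` is a semistar operation on the integral domain `D` with quotient field `K`:
a map on (nonzero) `D`-submodules of `K` satisfying `(xE)^⋆ = x·E^⋆`, monotonicity,
extensivity and idempotence. -/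
structure IsSemistarOperation (star : Submodule D K → Submodule D K) : Prop where
  ne_bot : ∀ {E : Submodule D K}, E ≠ ⊥ → star E ≠ ⊥
  map_smul : ∀ (x : K), x ≠ 0 → ∀ {E : Submodule D K}, E ≠ ⊥ →
    star (Submodule.map (LinearMap.mulLeft D x) E) = Submodule.map (LinearMap.mulLeft D x) (star E)
  mono : ∀ {E F : Submodule D K}, E ≠ ⊥ → F ≠ ⊥ → E ≤ F → star E ≤ star F
  le_star : ∀ {E : Submodule D K}, E ≠ ⊥ → E ≤ star E
  star_star : ∀ {E : Submodule D K}, E ≠ ⊥ → star (star E) = star E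

/-- The image in `K` of an ideal `I` of `D`, as a `D`-submodule of `K`. -/
def idealExt (K : Type*) [Field K] [Algebra D K] (I : Ideal D) : Submodule D K :=
  Submodule.map (Algebra.linearMap D K) I

/-- `I` is a quasi-⋆-ideal: a nonzero ideal of `D` with `I = I^⋆ ∩ D`. -/
def QuasiStarIdeal (star : Submodule D K → Submodule D K) (I : Ideal D) : Prop :=
  I ≠ ⊥ ∧ Submodule.comap (Algebra.linearMap D K) (star (idealExt K I)) = I

/-- `P` is a quasi-⋆-prime: a prime ideal which is a quasi-⋆-ideal. -/
def QuasiStarPrime (star : Submodule D K → Submodule D K) (P : Ideal D) : Prop :=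
  P.IsPrime ∧ QuasiStarIdeal star P

/-- `M` is a quasi-⋆-maximal ideal: maximal in the set of proper quasi-⋆-ideals of `D`. -/
def QuasiStarMaximal (star : Submodule D K → Submodule D K) (M : Ideal D) : Prop :=
  QuasiStarIdeal star M ∧ M ≠ ⊤ ∧
    ∀ J : Ideal D, QuasiStarIdeal star J → J ≠ ⊤ → M ≤ J → J = M

/-- The finite-type semistar operation `⋆_f` associated to `⋆`:
`E^{⋆_f} = ⋃ { F^⋆ : F nonzero finitely generated, F ⊆ E }`. -/
def finTypeOp (star : Submodule D K → Submodule D K) : Submodule D K → Submodule D K :=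
  fun E => ⨆ (F : Submodule D K) (_ : F ≠ ⊥) (_ : F.FG) (_ : F ≤ E), star F

/-- The extension `E·D_Q` of a `D`-submodule `E` of `K` to the localization of `D` at
(the complement of) `Q`, described as `{ x ∈ K : s·x ∈ E for some s ∉ Q }`. -/
def extendToPrime (Q : Ideal D) (E : Submodule D K) : Submodule D K :=
  Submodule.span D {x : K | ∃ s : D, s ∉ Q ∧ algebraMap D K s * x ∈ E}

/-- The stable semistar operation of finite type `⋆̃` associated to `⋆`:
`E^⋆̃ = ⋂ { E·D_Q : Q a quasi-⋆_f-maximal ideal of D }`. -/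
def stableOp (star : Submodule D K → Submodule D K) : Submodule D K → Submodule D K :=
  fun E => ⨅ (Q : Ideal D) (_ : QuasiStarMaximal (finTypeOp star) Q), extendToPrime Q E

/-- A rank-one discrete valuation ring: a (domain which is a) local PID which is not a field. -/
def IsDVR (R : Type*) [CommRing R] : Prop :=
  ∃ h : IsDomain R, @IsDiscreteValuationRing R _ h

/-- A valuation domain. -/
def IsValuationDomain (R : Type*) [CommRing R] : Prop :=
  ∃ h : IsDomain R, @ValuationRing R _ h

/-- `D` is a ⋆-almost Dedekind domain: `D_M` is a rank-one discrete valuation ring for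
every quasi-⋆_f-maximal ideal `M` of `D`. -/
def StarADD (star : Submodule D K → Submodule D K) : Prop :=
  ∀ (M : Ideal D) [M.IsPrime], QuasiStarMaximal (finTypeOp star) M →
    IsDVR (Localization.AtPrime M)

/-- `D` is a Prüfer ⋆-multiplication domain: `D_M` is a valuation domain for every
quasi-⋆_f-maximal ideal `M` of `D`. -/
def StarPMD (star : Submodule D K → Submodule D K) : Prop :=
  ∀ (M : Ideal D) [M.IsPrime], QuasiStarMaximal (finTypeOp star) M →
    IsValuationDomain (Localization.AtPrime M)

/-- `D` is ⋆-Noetherian: ascending chain condition on quasi-⋆-ideals. -/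
def StarNoetherian (star : Submodule D K → Submodule D K) : Prop :=
  ∀ c : ℕ →o Ideal D, (∀ n, QuasiStarIdeal star (c n)) → ∃ n, ∀ m, n ≤ m → c m = c n

/-- `D` is a ⋆-Dedekind domain: ⋆-Noetherian and a P⋆MD. -/
def StarDedekind (star : Submodule D K → Submodule D K) : Prop :=
  StarNoetherian star ∧ StarPMD star

/-- `D` has the ⋆_f-finite character property: every nonzero element of `D` lies in only
finitely many quasi-⋆_f-maximal ideals. -/
def StarFiniteCharacter (star : Submodule D K → Submodule D K) : Prop :=
  ∀ d : D, d ≠ 0 → {M : Ideal D | QuasiStarMaximal (finTypeOp star) M ∧ d ∈ M}.Finite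

/-- The `v`-operation `E ↦ (D : (D : E))`. -/
def vOp : Submodule D K → Submodule D K := fun E => 1 / (1 / E)

/-- A nonzero `D`-submodule `E` of `K` is quasi-∗-invertible if `(E·(D^∗ : E))^∗ = D^∗`. -/
def QuasiStarInvertible (star : Submodule D K → Submodule D K) (E : Submodule D K) : Prop :=
  star (E * (star 1 / E)) = star (1 : Submodule D K)

/-- `D` has the ∗-cancellation law: for nonzero fractional ideals `A`, `B`, `C`,
`(AB)^∗ = (AC)^∗` implies `B^∗ = C^∗`. -/
def StarCancellation (star : Submodule D K → Submodule D K) : Prop :=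
  ∀ A B C : Submodule D K, A ≠ ⊥ → B ≠ ⊥ → C ≠ ⊥ →
    IsFractional (nonZeroDivisors D) A → IsFractional (nonZeroDivisors D) B →
    IsFractional (nonZeroDivisors D) C →
    star (A * B) = star (A * C) → star B = star C

/-- The ∗-dimension of `D`: the supremum of the lengths of chains of quasi-∗-prime ideals
of `D` (between `(0)` and a quasi-∗-prime). -/
noncomputable def starDim (star : Submodule D K → Submodule D K) : ℕ∞ :=
  ⨆ (k : ℕ) (_ : ∃ c : Fin k → Ideal D, StrictMono c ∧ ∀ i, QuasiStarPrime star (c i)),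
    (k : ℕ∞)

/-- A submodule `T` of `K` (containing the image of an integral domain with quotient
field `K`) is integrally closed (in `K`) if every `x ∈ K` satisfying a monic polynomial
equation with coefficients in `T` belongs to `T`. -/
def IntegrallyClosedSub (T : Submodule D K) : Prop :=
  ∀ x : K, (∃ (n : ℕ) (c : Fin n → K), (∀ i, c i ∈ T) ∧
    x ^ n = ∑ i : Fin n, c i * x ^ (i : ℕ)) → x ∈ T

/-- The content ideal `c(p)` of a polynomial: the ideal generated by its coefficients. -/
def contentIdeal (p : Polynomial D) : Ideal D := Ideal.span (Set.range p.coeff)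

/-- The multiplicative set `N(⋆) = { h ∈ D[X] : h ≠ 0, c(h)^⋆ = D^⋆ }` (as a submonoid,
via the closure of this multiplicatively closed set). -/
noncomputable def nagataMonoid (star : Submodule D K → Submodule D K) : Submonoid (Polynomial D) :=
  Submonoid.closure
    {p : Polynomial D | p ≠ 0 ∧ star (idealExt K (contentIdeal p)) = star (1 : Submodule D K)}

/-- The Nagata ring `Na(D,⋆) = D[X]_{N(⋆)}`. -/
abbrev NagataRing (star : Submodule D K → Submodule D K) :=
  Localization (nagataMonoid star)

/-- `V` is a valuation overring of `D` (inside the quotient field `K`): `D ⊆ V ⊆ K` and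
for every nonzero `x ∈ K`, `x ∈ V` or `x⁻¹ ∈ V`. -/
def IsValuationOverring (D : Type*) [CommRing D] {K : Type*} [Field K] [Algebra D K]
    (V : Subring K) : Prop :=
  (∀ d : D, algebraMap D K d ∈ V) ∧ ∀ x : K, x ≠ 0 → (x ∈ V ∨ x⁻¹ ∈ V)

/-- `V` is a ∗-valuation overring of `D`: a valuation overring such that `F^∗ ⊆ FV` for
every nonzero finitely generated `D`-submodule `F` of `K`. -/
def IsStarValuationOverring (star : Submodule D K → Submodule D K) (V : Subring K) : Prop :=
  IsValuationOverring D V ∧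
    ∀ F : Submodule D K, F ≠ ⊥ → F.FG →
      star F ≤ Submodule.span D ((F : Set K) * (V : Set K))

/-- `D` is a Krull domain: there is a family of rank-one discrete valuation overrings of `D`
with quotient field `K` whose intersection is `D`, with finite character. -/
def IsKrullDomain (D : Type*) [CommRing D] (K : Type*) [Field K] [Algebra D K] : Prop :=
  ∃ 𝒱 : Set (Subring K),
    (∀ V ∈ 𝒱, (∀ d : D, algebraMap D K d ∈ V) ∧ IsDVR V ∧
      ∀ x : K, ∃ a ∈ V, ∃ b ∈ V, b ≠ 0 ∧ x * b = a) ∧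
    (⋂ V ∈ 𝒱, (V : Set K)) = Set.range (algebraMap D K) ∧
    ∀ d : D, d ≠ 0 → {V ∈ 𝒱 | ¬ ∃ y ∈ V, algebraMap D K d * y = 1}.Finite

end SemistarDefs

/-! Everything is checked after localizing at a quasi-`⋆_f`-maximal ideal `M`, which is prime
because `⋆_f` is again a semistar operation. As `Q` is `P`-primary and `x ∉ P`, the element `x` is
regular modulo `Q`. If `Q ⊈ M`, then `Q` contains a unit of `D_M`. If `Q ⊆ M`, compare `x` with
`q ∈ Q` in the valuation domain `D_M`: were `x` a multiple of `q` there, then `s x ∈ Q` for some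
`s ∉ M`, and regularity would give `s ∈ Q ⊆ M`. Hence `s q = x d` for some `s ∉ M` and `d ∈ D`, and
regularity puts `d` in `Q`: thus `s q ∈ Q (Q + xD)`. -/

section NonzeroFGSubmodules

variable {R V : Type*} [Semiring R] [AddCommMonoid V] [Module R V]

theorem map_ne_bot_of_injective {W : Type*} [AddCommMonoid W] [Module R W] {f : V →ₗ[R] W}
    (hf : Function.Injective f) {E : Submodule R V} (hE : E ≠ ⊥) : E.map f ≠ ⊥ :=
  ((Submodule.map_injective_of_injective hf).ne_iff' (Submodule.map_bot f)).2 hE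

/-- The nonzero finitely generated submodules of `E`, the index set of the union defining
`E^{⋆_f}`. -/
def nonzeroFGSubmodules (E : Submodule R V) : Set (Submodule R V) :=
  {F | F ≠ ⊥ ∧ F.FG ∧ F ≤ E}

theorem span_singleton_mem_nonzeroFGSubmodules {E : Submodule R V} {v : V} (hv : v ∈ E)
    (hv0 : v ≠ 0) : Submodule.span R {v} ∈ nonzeroFGSubmodules E :=
  ⟨mt Submodule.span_singleton_eq_bot.1 hv0, Submodule.fg_span_singleton v,
    (Submodule.span_singleton_le_iff_mem v E).2 hv⟩

theorem nonzeroFGSubmodules_nonempty {E : Submodule R V} (hE : E ≠ ⊥) :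
    (nonzeroFGSubmodules E).Nonempty :=
  let ⟨_, hv, hv0⟩ := Submodule.exists_mem_ne_zero_of_ne_bot hE
  ⟨_, span_singleton_mem_nonzeroFGSubmodules hv hv0⟩

theorem sup_mem_nonzeroFGSubmodules {E F G : Submodule R V} (hF : F ∈ nonzeroFGSubmodules E)
    (hG : G ∈ nonzeroFGSubmodules E) : F ⊔ G ∈ nonzeroFGSubmodules E :=
  ⟨ne_bot_of_le_ne_bot hF.1 le_sup_left, hF.2.1.sup hG.2.1, sup_le hF.2.2 hG.2.2⟩

theorem map_mem_nonzeroFGSubmodules {W : Type*} [AddCommMonoid W] [Module R W] {f : V →ₗ[R] W}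
    (hf : Function.Injective f) {E F : Submodule R V} (hF : F ∈ nonzeroFGSubmodules E) :
    F.map f ∈ nonzeroFGSubmodules (E.map f) :=
  ⟨map_ne_bot_of_injective hf hF.1, hF.2.1.map f, Submodule.map_mono hF.2.2⟩

end NonzeroFGSubmodules

section FiniteType

variable {D : Type*} [CommRing D] {K : Type*} [Field K] [Algebra D K]
  {star : Submodule D K → Submodule D K}

theorem finTypeOp_eq_sSup (star : Submodule D K → Submodule D K) (E : Submodule D K) :
    finTypeOp star E = sSup (star '' nonzeroFGSubmodules E) := by
  simp only [finTypeOp, nonzeroFGSubmodules, sSup_image, Set.mem_ofPred_eq, iSup_and]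

theorem star_le_finTypeOp {E F : Submodule D K} (hF : F ∈ nonzeroFGSubmodules E) :
    star F ≤ finTypeOp star E :=
  finTypeOp_eq_sSup star E ▸ le_sSup (Set.mem_image_of_mem star hF)

theorem finTypeOp_le_iff {E G : Submodule D K} :
    finTypeOp star E ≤ G ↔ ∀ F ∈ nonzeroFGSubmodules E, star F ≤ G := by
  rw [finTypeOp_eq_sSup, sSup_le_iff, Set.forall_mem_image]

theorem finTypeOp_mono {E F : Submodule D K} (hEF : E ≤ F) : finTypeOp star E ≤ finTypeOp star F :=
  finTypeOp_le_iff.2 fun _ hG ↦ star_le_finTypeOp ⟨hG.1, hG.2.1, hG.2.2.trans hEF⟩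

theorem map_mulLeft_map_mulLeft_of_mul_eq_one {R A : Type*} [CommSemiring R] [Semiring A]
    [Algebra R A] {a b : A} (hab : a * b = 1) (E : Submodule R A) :
    (E.map (LinearMap.mulLeft R b)).map (LinearMap.mulLeft R a) = E := by
  rw [← Submodule.map_comp, ← LinearMap.mulLeft_mul, hab, LinearMap.mulLeft_one, Submodule.map_id]

namespace IsSemistarOperation

theorem le_finTypeOp (hstar : IsSemistarOperation star) (E : Submodule D K) :
    E ≤ finTypeOp star E := by
  intro e he
  rcases eq_or_ne e 0 with rfl | he0
  · exact zero_mem _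
  · have hspan := span_singleton_mem_nonzeroFGSubmodules he he0
    exact star_le_finTypeOp hspan (hstar.le_star hspan.1 (Submodule.mem_span_singleton_self e))

theorem directedOn_image_nonzeroFGSubmodules (hstar : IsSemistarOperation star)
    (E : Submodule D K) : DirectedOn (· ≤ ·) (star '' nonzeroFGSubmodules E) := by
  rintro _ ⟨F, hF, rfl⟩ _ ⟨G, hG, rfl⟩
  have hFG := sup_mem_nonzeroFGSubmodules hF hG
  exact ⟨star (F ⊔ G), Set.mem_image_of_mem star hFG,
    hstar.mono hF.1 hFG.1 le_sup_left, hstar.mono hG.1 hFG.1 le_sup_right⟩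

theorem exists_le_star_of_le_finTypeOp (hstar : IsSemistarOperation star) {E F : Submodule D K}
    (hE : E ≠ ⊥) (hF : F.FG) (hFE : F ≤ finTypeOp star E) :
    ∃ G ∈ nonzeroFGSubmodules E, F ≤ star G := by
  have hcompact := (CompleteLattice.isCompactElement_iff_le_of_directed_sSup_le _ F).1
    ((Submodule.fg_iff_compact F).1 hF)
  rw [finTypeOp_eq_sSup] at hFE
  simpa only [Set.exists_mem_image] using hcompact _ ((nonzeroFGSubmodules_nonempty hE).image star)
    (hstar.directedOn_image_nonzeroFGSubmodules E) hFE

theorem finTypeOp_finTypeOp (hstar : IsSemistarOperation star) {E : Submodule D K} (hE : E ≠ ⊥) :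
    finTypeOp star (finTypeOp star E) = finTypeOp star E := by
  refine le_antisymm (finTypeOp_le_iff.2 fun F ⟨hF0, hFfg, hFE⟩ ↦ ?_) (hstar.le_finTypeOp _)
  obtain ⟨G, hG, hFG⟩ := hstar.exists_le_star_of_le_finTypeOp hE hFfg hFE
  calc star F ≤ star (star G) := hstar.mono hF0 (hstar.ne_bot hG.1) hFG
    _ = star G := hstar.star_star hG.1
    _ ≤ finTypeOp star E := star_le_finTypeOp hG

theorem map_mulLeft_finTypeOp_le (hstar : IsSemistarOperation star) {x : K} (hx : x ≠ 0)
    (E : Submodule D K) :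
    (finTypeOp star E).map (LinearMap.mulLeft D x) ≤
      finTypeOp star (E.map (LinearMap.mulLeft D x)) := by
  rw [Submodule.map_le_iff_le_comap, finTypeOp_le_iff]
  intro F hF
  rw [← Submodule.map_le_iff_le_comap, ← hstar.map_smul x hx hF.1]
  exact star_le_finTypeOp (map_mem_nonzeroFGSubmodules (mul_right_injective₀ hx) hF)

theorem finTypeOp_map_mulLeft (hstar : IsSemistarOperation star) {x : K} (hx : x ≠ 0)
    (E : Submodule D K) :
    finTypeOp star (E.map (LinearMap.mulLeft D x)) =
      (finTypeOp star E).map (LinearMap.mulLeft D x) := by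
  refine le_antisymm ?_ (hstar.map_mulLeft_finTypeOp_le hx E)
  have hinv := hstar.map_mulLeft_finTypeOp_le (inv_ne_zero hx) (E.map (LinearMap.mulLeft D x))
  rw [map_mulLeft_map_mulLeft_of_mul_eq_one (inv_mul_cancel₀ hx)] at hinv
  simpa only [map_mulLeft_map_mulLeft_of_mul_eq_one (mul_inv_cancel₀ hx)] using
    Submodule.map_mono (f := LinearMap.mulLeft D x) hinv

end IsSemistarOperation

theorem isSemistarOperation_finTypeOp (hstar : IsSemistarOperation star) :
    IsSemistarOperation (finTypeOp star) where
  ne_bot hE := ne_bot_of_le_ne_bot hE (hstar.le_finTypeOp _)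
  map_smul _ hx E _ := hstar.finTypeOp_map_mulLeft hx E
  mono _ _ hEF := finTypeOp_mono hEF
  le_star _ := hstar.le_finTypeOp _
  star_star hE := hstar.finTypeOp_finTypeOp hE

end FiniteType

section QuasiStarClosure

variable {D : Type*} [CommRing D] {K : Type*} [Field K] [Algebra D K]
  {star : Submodule D K → Submodule D K}

/-- The contraction `I^⋆ ∩ D`, which for `I ≠ 0` is the smallest quasi-`⋆`-ideal containing `I`. -/
def quasiStarClosure (star : Submodule D K → Submodule D K) (I : Ideal D) : Ideal D :=
  Submodule.comap (Algebra.linearMap D K) (star (idealExt K I))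

variable [FaithfulSMul D K]

theorem idealExt_ne_bot {I : Ideal D} (hI : I ≠ ⊥) : idealExt K I ≠ ⊥ :=
  map_ne_bot_of_injective (FaithfulSMul.algebraMap_injective D K) hI

namespace IsSemistarOperation

theorem le_quasiStarClosure (hstar : IsSemistarOperation star) {I : Ideal D} (hI : I ≠ ⊥) :
    I ≤ quasiStarClosure star I :=
  Submodule.map_le_iff_le_comap.1 (hstar.le_star (idealExt_ne_bot hI))

theorem quasiStarIdeal_quasiStarClosure (hstar : IsSemistarOperation star) {I : Ideal D}
    (hI : I ≠ ⊥) : QuasiStarIdeal star (quasiStarClosure star I) := by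
  have hcl : quasiStarClosure star I ≠ ⊥ := ne_bot_of_le_ne_bot hI (hstar.le_quasiStarClosure hI)
  refine ⟨hcl, le_antisymm (Submodule.comap_mono ?_) (hstar.le_quasiStarClosure hcl)⟩
  have hE := idealExt_ne_bot (K := K) hI
  calc star (idealExt K (quasiStarClosure star I)) ≤ star (star (idealExt K I)) :=
        hstar.mono (idealExt_ne_bot hcl) (hstar.ne_bot hE) (Submodule.map_comap_le _ _)
    _ = star (idealExt K I) := hstar.star_star hE

-- This is `b I^⋆ = (bI)^⋆ ⊆ J^⋆` contracted to `D`.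
theorem mul_mem_of_mem_quasiStarClosure (hstar : IsSemistarOperation star) {I J : Ideal D}
    (hI : I ≠ ⊥) (hJ : QuasiStarIdeal star J) {b d : D} (hbI : ∀ i ∈ I, b * i ∈ J)
    (hd : d ∈ quasiStarClosure star I) : b * d ∈ J := by
  rcases eq_or_ne b 0 with rfl | hb
  · simp
  have hbK : algebraMap D K b ≠ 0 := by
    rwa [Ne, FaithfulSMul.algebraMap_eq_zero_iff]
  have hE := idealExt_ne_bot (K := K) hI
  have hle : (idealExt K I).map (LinearMap.mulLeft D (algebraMap D K b)) ≤ idealExt K J := by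
    rintro _ ⟨_, ⟨i, hi, rfl⟩, rfl⟩
    exact ⟨b * i, hbI i hi, map_mul (algebraMap D K) b i⟩
  have hstar_le := hstar.mono (map_ne_bot_of_injective (mul_right_injective₀ hbK) hE)
    (idealExt_ne_bot hJ.1) hle
  rw [hstar.map_smul _ hbK hE] at hstar_le
  rw [← hJ.2, Submodule.mem_comap, Algebra.linearMap_apply, map_mul]
  exact hstar_le (Submodule.mem_map_of_mem hd)

end IsSemistarOperation

theorem QuasiStarMaximal.quasiStarClosure_eq_top (hstar : IsSemistarOperation star) {M I : Ideal D}
    (hM : QuasiStarMaximal star M) (hMI : M < I) : quasiStarClosure star I = ⊤ := by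
  obtain ⟨⟨hM0, -⟩, -, hmax⟩ := hM
  have hI : I ≠ ⊥ := ne_bot_of_le_ne_bot hM0 hMI.le
  have hIcl := hstar.le_quasiStarClosure hI
  by_contra hne
  have hcl := hmax _ (hstar.quasiStarIdeal_quasiStarClosure hI) hne (hMI.le.trans hIcl)
  exact hMI.not_ge (hcl ▸ hIcl)

theorem QuasiStarMaximal.isPrime (hstar : IsSemistarOperation star) {M : Ideal D}
    (hM : QuasiStarMaximal star M) : M.IsPrime := by
  refine ⟨hM.2.1, fun {a b} hab ↦ or_iff_not_imp_left.2 fun ha ↦ ?_⟩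
  have hlt : M < Ideal.span {a} ⊔ M := by
    rwa [right_lt_sup, Ideal.span_singleton_le_iff_mem]
  have hone : 1 ∈ quasiStarClosure star (Ideal.span {a} ⊔ M) := by
    simp [hM.quasiStarClosure_eq_top hstar hlt]
  have hb : ∀ i ∈ Ideal.span {a} ⊔ M, b * i ∈ M := by
    intro i hi
    obtain ⟨c, m, hm, rfl⟩ := Ideal.mem_span_singleton_sup.1 hi
    rw [mul_add, mul_left_comm, mul_comm b a]
    exact M.add_mem (M.mul_mem_left c hab) (M.mul_mem_left b hm)
  simpa using
    hstar.mul_mem_of_mem_quasiStarClosure (ne_bot_of_le_ne_bot hM.1.1 hlt.le) hM.1 hb hone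

end QuasiStarClosure

section Localization

variable {R : Type*} [CommRing R]

theorem algebraMap_dvd_algebraMap_iff_exists_dvd_mul {S : Type*} [CommRing S] [Algebra R S]
    (N : Submonoid R) [IsLocalization N S] {a b : R} :
    algebraMap R S a ∣ algebraMap R S b ↔ ∃ s ∈ N, a ∣ s * b := by
  rw [← Ideal.mem_span_singleton, ← Set.image_singleton, ← Ideal.map_span,
    IsLocalization.algebraMap_mem_map_algebraMap_iff N]
  simp only [Ideal.mem_span_singleton]

theorem exists_notMem_dvd_mul_or_dvd_mul {M : Ideal R} [M.IsPrime]
    (hM : IsValuationDomain (Localization.AtPrime M)) (a b : R) :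
    ∃ s ∉ M, a ∣ s * b ∨ b ∣ s * a := by
  obtain ⟨_, _⟩ := hM
  have htotal := ValuationRing.dvd_total (algebraMap R (Localization.AtPrime M) a)
    (algebraMap R (Localization.AtPrime M) b)
  simpa only [algebraMap_dvd_algebraMap_iff_exists_dvd_mul M.primeCompl, Ideal.mem_primeCompl_iff,
    ← exists_or, ← and_or_left] using htotal

theorem isSMulRegular_quotient_of_isPrimary {Q : Ideal R} (hQ : Q.IsPrimary) {x : R}
    (hx : x ∉ Q.radical) : IsSMulRegular (R ⧸ Q) x :=
  (isSMulRegular_quotient_iff_mem_of_smul_mem Q x).2 fun d hd ↦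
    ((Ideal.isPrimary_iff.1 hQ).2 (mul_comm x d ▸ hd)).resolve_right hx

theorem exists_notMem_mul_mem_mul_add {M : Ideal R} [M.IsPrime]
    (hM : IsValuationDomain (Localization.AtPrime M)) {Q : Ideal R} {x q : R}
    (hx : IsSMulRegular (R ⧸ Q) x) (hq : q ∈ Q) :
    ∃ s ∉ M, s * q ∈ Q * (Q + Ideal.span {x}) := by
  rw [isSMulRegular_quotient_iff_mem_of_smul_mem] at hx
  by_cases hQM : Q ≤ M
  · obtain ⟨s, hs, ⟨d, hd⟩ | ⟨d, hd⟩⟩ := exists_notMem_dvd_mul_or_dvd_mul hM x q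
    · have hdQ : d ∈ Q := hx d (by
        rw [smul_eq_mul, ← hd]
        exact Q.mul_mem_left s hq)
      have hxsup : x ∈ Q + Ideal.span {x} := Ideal.mem_sup_right (Ideal.mem_span_singleton_self x)
      exact ⟨s, hs, by simpa only [hd, mul_comm x d] using Ideal.mul_mem_mul hdQ hxsup⟩
    · have hsQ : s ∈ Q := hx s (by
        rw [smul_eq_mul, mul_comm, hd]
        exact Q.mul_mem_right d hq)
      exact absurd (hQM hsQ) hs
  · obtain ⟨t, htQ, htM⟩ := SetLike.not_le_iff_exists.1 hQM
    exact ⟨t, htM, Ideal.mul_mem_mul htQ (Ideal.mem_sup_left hq)⟩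

end Localization

section ExtendToPrime

variable {D : Type*} [CommRing D] {K : Type*} [Field K] [Algebra D K]

theorem extendToPrime_idealExt_le {M : Ideal D} [M.IsPrime] {I J : Ideal D}
    (h : ∀ i ∈ I, ∃ s ∉ M, s * i ∈ J) :
    extendToPrime M (idealExt K I) ≤ extendToPrime M (idealExt K J) := by
  refine Submodule.span_mono ?_
  rintro y ⟨t, ht, i, hi, hiy⟩
  obtain ⟨s, hs, hsi⟩ := h i hi
  refine ⟨s * t, ‹M.IsPrime›.mul_notMem hs ht, s * i, hsi, ?_⟩
  rw [Algebra.linearMap_apply] at hiy ⊢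
  rw [map_mul, map_mul, hiy, mul_assoc]

theorem extendToPrime_mul_add_eq {M : Ideal D} [M.IsPrime]
    (hM : IsValuationDomain (Localization.AtPrime M)) {Q : Ideal D} {x : D}
    (hx : IsSMulRegular (D ⧸ Q) x) :
    extendToPrime M (idealExt K Q) =
      extendToPrime M (idealExt K (Q * (Q + Ideal.span {x}))) :=
  le_antisymm (extendToPrime_idealExt_le fun _ hq ↦ exists_notMem_mul_mem_mul_add hM hx hq)
    (Submodule.span_mono fun _ ⟨s, hs, hy⟩ ↦ ⟨s, hs, Submodule.map_mono Ideal.mul_le_left hy⟩)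

end ExtendToPrime

theorem stableOp_primary_mul_add_eq_general {D : Type*} [CommRing D] {K : Type*} [Field K]
    [Algebra D K] [IsFractionRing D K] {star : Submodule D K → Submodule D K}
    (hstar : IsSemistarOperation star) (hPMD : StarPMD star) {Q : Ideal D} {x : D}
    (hx : IsSMulRegular (D ⧸ Q) x) :
    stableOp star (idealExt K Q) =
      stableOp star (idealExt K (Q * (Q + Ideal.span {x}))) :=
  biInf_congr fun M hM ↦
    have : M.IsPrime := hM.isPrime (isSemistarOperation_finTypeOp hstar)
    extendToPrime_mul_add_eq (hPMD M hM) hx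

section Statement

variable {D : Type*} [CommRing D] [IsDomain D]
variable {K : Type*} [Field K] [Algebra D K] [IsFractionRing D K]

/-- `D` an integral domain, `⋆` a semistar operation such that `D` is a
P⋆MD. If `Q` is a nonzero `P`-primary ideal and `x ∈ D \ P`, then
`Q^⋆̃ = (Q(Q + xD))^⋆̃`. -/
theorem stableOp_primary_mul_add_eq
    (star : Submodule D K → Submodule D K) (hstar : IsSemistarOperation star)
    (hPMD : StarPMD star) (P Q : Ideal D) (hP : P.IsPrime) (hQ : Q ≠ ⊥)
    (hQprimary : Q.IsPrimary) (hrad : Q.radical = P) (x : D) (hx : x ∉ P) :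
    stableOp star (idealExt K Q) =
      stableOp star (idealExt K (Q * (Q + Ideal.span {x}))) :=
  stableOp_primary_mul_add_eq_general hstar hPMD
    (isSMulRegular_quotient_of_isPrimary hQprimary (hrad ▸ hx))

end Statement
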